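/- Let φ : ℝ → ℝ be a smooth function satisfying the graph-like forward self-similar profile equation. If there exist α, β ∈ ℝ such that φ(0)·φ(x₁) ≤ α·s(x₁) + β for all x₁ ∈ ℝ, then φ is linear through the origin: there exists c ∈ ℝ such that φ(x₁) = c·x₁ for all x₁ ∈ ℝ. -/

import Mathlib

/-!
Measure everything in the arclength `s` of the graph. Let `τ` and `ν` be the tangential and normal
components of the position vector `X = (x, φ x)`, so that `∂ₛτ = 1 + kν`, while the profile equation
reads `∂ₛ²k = -ν/4`. Then the flux `g = k ∂ₛk + (τ - s)/4` satisfies `∂ₛg = (∂ₛk)² ≥ 0`, and it is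
itself the arclength derivative of the energy `E = k²/2 + (|X|² - s²)/8`. Hence `E - (α/4) s` is a
convex function of `s`. As the chord from `X(0)` is no longer than the arc, the growth hypothesis
bounds it by `k²/2` plus a constant. The tangent angle is bounded and has arclength derivative `k`,
so `k²` cannot stay away from `0` near either end, and a convex function on the line which is
bounded above along sequences tending to both ends is constant. So `∂ₛk = 0`, hence `ν = 0`, that is
`φ = x φ'`.
-/

open Set Filter

theorem exists_mem_Ioo_abs_lt_of_abs_le {f f' : ℝ → ℝ} {a b M ε : ℝ} (hab : a < b)
    (hf : ∀ x ∈ Icc a b, HasDerivAt f (f' x) x) (hM : ∀ x ∈ Icc a b, |f x| ≤ M)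
    (hε : 2 * M < ε * (b - a)) : ∃ x ∈ Ioo a b, |f' x| < ε := by
  obtain ⟨x, hx, hslope⟩ := exists_hasDerivAt_eq_slope f f' hab
    (fun x hx ↦ (hf x hx).continuousAt.continuousWithinAt)
    (fun x hx ↦ hf x (Ioo_subset_Icc_self hx))
  refine ⟨x, hx, ?_⟩
  rw [hslope, abs_div, abs_of_pos (sub_pos.2 hab), div_lt_iff₀ (sub_pos.2 hab)]
  calc |f b - f a| ≤ |f b| + |f a| := abs_sub _ _
    _ ≤ M + M := add_le_add (hM b (right_mem_Icc.2 hab.le)) (hM a (left_mem_Icc.2 hab.le))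
    _ < ε * (b - a) := by linarith

section ReparametrizedConvexity

variable {F v g : ℝ → ℝ} {C : ℝ}

theorem nonpos_of_hasDerivAt_mul_monotone (hF : ∀ x, HasDerivAt F (v x * g x) x)
    (hv : ∀ x, 1 ≤ v x) (hg : Monotone g) (hC : ∃ᶠ x in atTop, F x ≤ C) (a : ℝ) : g a ≤ 0 := by
  by_contra! ha
  have hgrowth : ∀ x, a ≤ x → g a * (x - a) ≤ F x - F a := fun x hax ↦
    (convex_Ici a).mul_sub_le_image_sub_of_le_deriv
      (fun y _ ↦ (hF y).continuousAt.continuousWithinAt)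
      (fun y _ ↦ (hF y).differentiableAt.differentiableWithinAt)
      (fun y hy ↦ by
        have hay : g a ≤ g y := hg (interior_subset hy)
        rw [(hF y).deriv]
        exact hay.trans (le_mul_of_one_le_left (ha.le.trans hay) (hv y)))
      a self_mem_Ici x hax hax
  obtain ⟨x, hx, hFx⟩ := frequently_atTop'.1 hC (max a (a + (C - F a) / g a))
  have hlarge : (C - F a) / g a < x - a := by linarith [(le_max_right _ _).trans_lt hx]
  rw [div_lt_iff₀' ha] at hlarge
  linarith [hgrowth x ((le_max_left _ _).trans hx.le)]

-- `F` is a convex function of the parameter `∫ v`, which runs over the whole line.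
theorem eq_zero_of_hasDerivAt_mul_monotone (hF : ∀ x, HasDerivAt F (v x * g x) x)
    (hv : ∀ x, 1 ≤ v x) (hg : Monotone g) (htop : ∃ᶠ x in atTop, F x ≤ C)
    (hbot : ∃ᶠ x in atBot, F x ≤ C) (a : ℝ) : g a = 0 := by
  refine le_antisymm (nonpos_of_hasDerivAt_mul_monotone hF hv hg htop a) ?_
  have hreflected : -g (- -a) ≤ 0 := by
    refine nonpos_of_hasDerivAt_mul_monotone (F := fun x ↦ F (-x)) (v := fun x ↦ v (-x))
      (g := fun x ↦ -g (-x)) (C := C) (fun x ↦ ?_) (fun x ↦ hv (-x))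
      (fun x y hxy ↦ neg_le_neg (hg (neg_le_neg hxy))) ?_ (-a)
    · exact ((hF (-x)).comp x (hasDerivAt_neg x)).congr_deriv (by ring)
    · exact tendsto_neg_atBot_atTop.frequently (by simpa only [neg_neg] using hbot)
  simpa only [neg_neg, neg_nonpos] using hreflected

end ReparametrizedConvexity

theorem eq_deriv_zero_mul_of_eq_self_mul_deriv {f : ℝ → ℝ} (hf : ContDiff ℝ 2 f)
    (h : ∀ x, f x = x * deriv f x) (x : ℝ) : f x = deriv f 0 * x := by
  have hf' : ContDiff ℝ 1 (deriv f) := hf.deriv'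
  have hx_mul : ∀ x, x * deriv (deriv f) x = 0 := fun x ↦ by
    have hprod := (hasDerivAt_id' x).mul (hf'.differentiable one_ne_zero x).hasDerivAt
    have hf_deriv := (hf.differentiable two_ne_zero x).hasDerivAt
    have hfun : f = (fun x ↦ x) * deriv f := funext h
    rw [← hfun] at hprod
    linarith [hf_deriv.unique hprod]
  have hzero : deriv (deriv f) = fun _ ↦ 0 :=
    (hf'.continuous_deriv le_rfl).ext_on (dense_compl_singleton 0) continuous_const
      fun x hx ↦ (mul_eq_zero.1 (hx_mul x)).resolve_left hx
  rw [h x, is_const_of_deriv_eq_zero (hf'.differentiable one_ne_zero) (congrFun hzero) x 0,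
    mul_comm]

namespace GraphCurve

/-- The speed `v = √(1 + φ'²)` of the parametrization `x ↦ (x, φ x)`, i.e. the arclength density. -/
noncomputable def speed (φ : ℝ → ℝ) (x : ℝ) : ℝ := √(1 + deriv φ x ^ 2)

/-- The signed curvature `k` of the graph of `φ`, with respect to the upward normal. -/
noncomputable def curvature (φ : ℝ → ℝ) (x : ℝ) : ℝ := deriv (deriv φ) x / speed φ x ^ 3

/-- The signed arclength `s` of the graph of `φ`, measured from the point over `0`. -/
noncomputable def arclength (φ : ℝ → ℝ) (x : ℝ) : ℝ := ∫ z in (0 : ℝ)..x, speed φ z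

/-- The arclength derivative `∂ₛf = f' / v` along the graph of `φ`. -/
noncomputable def arclengthDeriv (φ f : ℝ → ℝ) (x : ℝ) : ℝ := deriv f x / speed φ x

/-- The component `τ` of the position vector `(x, φ x)` along the unit tangent `(1, φ') / v`. -/
noncomputable def tangentComponent (φ : ℝ → ℝ) (x : ℝ) : ℝ := (x + φ x * deriv φ x) / speed φ x

/-- The component `ν` of the position vector `(x, φ x)` along the upward unit normal
`(-φ', 1) / v`. -/
noncomputable def normalComponent (φ : ℝ → ℝ) (x : ℝ) : ℝ := (φ x - x * deriv φ x) / speed φ x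

/-- The profile equation of graph-like forward self-similar solutions of the surface diffusion
flow. -/
def IsSelfSimilarProfile (φ : ℝ → ℝ) : Prop :=
  ∀ x, (φ x - x * deriv φ x) / 4 = -deriv (arclengthDeriv φ (curvature φ)) x

/-- The energy `E = k² / 2 + (|X|² - s²) / 8`, a convex function of arclength along a self-similar
profile. -/
noncomputable def energy (φ : ℝ → ℝ) (x : ℝ) : ℝ :=
  curvature φ x ^ 2 / 2 + (x ^ 2 + φ x ^ 2 - arclength φ x ^ 2) / 8

/-- The flux `g = k ∂ₛk + (τ - s) / 4`, which is the arclength derivative of the energy. -/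
noncomputable def flux (φ : ℝ → ℝ) (x : ℝ) : ℝ :=
  curvature φ x * arclengthDeriv φ (curvature φ) x + (tangentComponent φ x - arclength φ x) / 4

variable {φ : ℝ → ℝ} {n : WithTop ℕ∞}

theorem speed_sq (φ : ℝ → ℝ) (x : ℝ) : speed φ x ^ 2 = 1 + deriv φ x ^ 2 :=
  Real.sq_sqrt (by positivity)

theorem one_le_speed (φ : ℝ → ℝ) (x : ℝ) : 1 ≤ speed φ x :=
  Real.one_le_sqrt.2 (le_add_of_nonneg_right (sq_nonneg _))

theorem speed_pos (φ : ℝ → ℝ) (x : ℝ) : 0 < speed φ x :=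
  one_pos.trans_le (one_le_speed φ x)

theorem speed_ne_zero (φ : ℝ → ℝ) (x : ℝ) : speed φ x ≠ 0 :=
  (speed_pos φ x).ne'

theorem contDiff_speed (hφ : ContDiff ℝ (n + 1) φ) : ContDiff ℝ n (speed φ) :=
  (contDiff_const.add (hφ.deriv'.pow 2)).sqrt fun x ↦ by positivity

theorem contDiff_curvature (hφ : ContDiff ℝ (n + 1 + 1) φ) : ContDiff ℝ n (curvature φ) :=
  hφ.deriv'.deriv'.div ((contDiff_speed (hφ.of_le le_self_add)).pow 3)
    fun x ↦ pow_ne_zero 3 (speed_ne_zero φ x)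

theorem contDiff_arclengthDeriv {f : ℝ → ℝ} (hφ : ContDiff ℝ (n + 1) φ)
    (hf : ContDiff ℝ (n + 1) f) : ContDiff ℝ n (arclengthDeriv φ f) :=
  hf.deriv'.div (contDiff_speed hφ) (speed_ne_zero φ)

theorem hasDerivAt_speed_mul_arclengthDeriv {f : ℝ → ℝ} {x : ℝ} (hf : DifferentiableAt ℝ f x) :
    HasDerivAt f (speed φ x * arclengthDeriv φ f x) x :=
  hf.hasDerivAt.congr_deriv (mul_div_cancel₀ _ (speed_ne_zero φ x)).symm

theorem hasDerivAt_arclength (hφ : ContDiff ℝ 1 φ) (x : ℝ) :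
    HasDerivAt (arclength φ) (speed φ x) x := by
  have hspeed : Continuous (speed φ) := (contDiff_speed (n := 0) (by simpa using hφ)).continuous
  exact hspeed.integral_hasStrictDerivAt 0 x |>.hasDerivAt

theorem sq_add_sq_le_sq_integral_speed (hφ : ContDiff ℝ 1 φ) (a b : ℝ) :
    (b - a) ^ 2 + (φ b - φ a) ^ 2 ≤ (∫ x in a..b, speed φ x) ^ 2 := by
  have hcurve : ∀ x, HasDerivAt (fun x : ℝ ↦ (x + φ x * Complex.I : ℂ))
      (1 + deriv φ x * Complex.I) x := fun x ↦
    (hasDerivAt_id' x).ofReal_comp.add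
      ((hφ.differentiable one_ne_zero x).hasDerivAt.ofReal_comp.mul_const Complex.I)
  have hcont : Continuous fun x ↦ (1 + deriv φ x * Complex.I : ℂ) := by
    have := hφ.continuous_deriv le_rfl
    fun_prop
  have hnorm : ∀ x, ‖(1 + deriv φ x * Complex.I : ℂ)‖ = speed φ x := fun x ↦ by
    simpa [speed] using Complex.norm_add_mul_I 1 (deriv φ x)
  have hchord : ∫ x in a..b, (1 + deriv φ x * Complex.I : ℂ) =
      ((b - a : ℝ) : ℂ) + ((φ b - φ a : ℝ) : ℂ) * Complex.I := by
    rw [intervalIntegral.integral_eq_sub_of_hasDerivAt (fun x _ ↦ hcurve x)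
      (hcont.intervalIntegrable a b)]
    push_cast
    ring
  have hle := intervalIntegral.norm_integral_le_abs_integral_norm (a := a) (b := b)
    (f := fun x ↦ (1 + deriv φ x * Complex.I : ℂ)) (μ := MeasureTheory.volume)
  rw [hchord, Complex.norm_add_mul_I] at hle
  simpa only [hnorm, sq_abs] using (Real.sqrt_le_left (abs_nonneg _)).1 hle

theorem hasDerivAt_deriv (hφ : ContDiff ℝ 2 φ) (x : ℝ) :
    HasDerivAt (deriv φ) (curvature φ x * speed φ x ^ 3) x :=
  (hφ.deriv'.differentiable one_ne_zero x).hasDerivAt.congr_deriv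
    (div_mul_cancel₀ _ (pow_ne_zero 3 (speed_ne_zero φ x))).symm

theorem hasDerivAt_speed (hφ : ContDiff ℝ 2 φ) (x : ℝ) :
    HasDerivAt (speed φ) (deriv φ x * curvature φ x * speed φ x ^ 2) x := by
  have hradicand : HasDerivAt (fun x ↦ 1 + deriv φ x ^ 2)
      (2 * deriv φ x * (curvature φ x * speed φ x ^ 3)) x :=
    (((hasDerivAt_deriv hφ x).pow 2).const_add 1).congr_deriv (by ring)
  refine (hradicand.sqrt (by positivity)).congr_deriv ?_
  rw [← speed]
  have := speed_ne_zero φ x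
  field_simp

theorem hasDerivAt_arctan_deriv (hφ : ContDiff ℝ 2 φ) (x : ℝ) :
    HasDerivAt (fun x ↦ Real.arctan (deriv φ x)) (speed φ x * curvature φ x) x := by
  refine (hasDerivAt_deriv hφ x).arctan.congr_deriv ?_
  rw [← speed_sq]
  have := speed_ne_zero φ x
  field_simp

theorem hasDerivAt_tangentComponent (hφ : ContDiff ℝ 2 φ) (x : ℝ) :
    HasDerivAt (tangentComponent φ)
      (speed φ x * (1 + curvature φ x * normalComponent φ x)) x := by
  have hφ' := (hφ.differentiable two_ne_zero x).hasDerivAt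
  have hquot := ((hasDerivAt_id' x).add (hφ'.mul (hasDerivAt_deriv hφ x))).div
    (hasDerivAt_speed hφ x) (speed_ne_zero φ x)
  refine hquot.congr_deriv ?_
  have := speed_ne_zero φ x
  have hsq : deriv φ x ^ 2 = speed φ x ^ 2 - 1 := by rw [speed_sq]; ring
  simp only [normalComponent, Pi.add_apply, Pi.mul_apply]
  field_simp
  ring_nf
  simp only [hsq]
  ring

-- The tangent angle `arctan φ'` turns by less than `π` in total.
theorem exists_mem_Ioo_abs_curvature_lt (hφ : ContDiff ℝ 2 φ) {a b ε : ℝ} (hab : a < b)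
    (hε : Real.pi < ε * (b - a)) : ∃ x ∈ Ioo a b, |curvature φ x| < ε := by
  obtain ⟨x, hx, hlt⟩ := exists_mem_Ioo_abs_lt_of_abs_le (M := Real.pi / 2) (ε := ε) hab
    (fun x _ ↦ hasDerivAt_arctan_deriv hφ x)
    (fun x _ ↦ abs_le.2 ⟨(Real.neg_pi_div_two_lt_arctan _).le, (Real.arctan_lt_pi_div_two _).le⟩)
    (by linarith)
  refine ⟨x, hx, lt_of_le_of_lt ?_ hlt⟩
  rw [abs_mul, abs_of_pos (speed_pos φ x)]
  exact le_mul_of_one_le_left (abs_nonneg _) (one_le_speed φ x)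

theorem hasDerivAt_energy (hφ : ContDiff ℝ 3 φ) (x : ℝ) :
    HasDerivAt (energy φ) (speed φ x * flux φ x) x := by
  have hφ' := (hφ.differentiable three_ne_zero x).hasDerivAt
  have hk : DifferentiableAt ℝ (curvature φ) x :=
    (contDiff_curvature (n := 1) hφ).differentiable one_ne_zero x
  have hs := hasDerivAt_arclength (hφ.of_le (by norm_num)) x
  have hsum := (((hasDerivAt_speed_mul_arclengthDeriv (φ := φ) hk).pow 2).div_const 2).add
    (((((hasDerivAt_id' x).pow 2).add (hφ'.pow 2)).sub (hs.pow 2)).div_const 8)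
  refine hsum.congr_deriv ?_
  have := speed_ne_zero φ x
  simp only [flux, tangentComponent]
  field_simp
  ring

theorem IsSelfSimilarProfile.hasDerivAt_arclengthDeriv_curvature (h : IsSelfSimilarProfile φ)
    (hφ : ContDiff ℝ 4 φ) (x : ℝ) :
    HasDerivAt (arclengthDeriv φ (curvature φ)) (-(speed φ x * normalComponent φ x) / 4) x := by
  have hdiff : ContDiff ℝ 1 (arclengthDeriv φ (curvature φ)) :=
    contDiff_arclengthDeriv (hφ.of_le (by norm_num)) (contDiff_curvature hφ)
  refine (hdiff.differentiable one_ne_zero x).hasDerivAt.congr_deriv ?_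
  rw [normalComponent, mul_div_cancel₀ _ (speed_ne_zero φ x)]
  linarith [h x]

theorem IsSelfSimilarProfile.hasDerivAt_flux (h : IsSelfSimilarProfile φ) (hφ : ContDiff ℝ 4 φ)
    (x : ℝ) :
    HasDerivAt (flux φ) (speed φ x * arclengthDeriv φ (curvature φ) x ^ 2) x := by
  have hk : DifferentiableAt ℝ (curvature φ) x :=
    (contDiff_curvature (n := 2) hφ).differentiable two_ne_zero x
  have hτ := hasDerivAt_tangentComponent (hφ.of_le (by norm_num)) x
  have hs := hasDerivAt_arclength (hφ.of_le (by norm_num)) x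
  have hsum := ((hasDerivAt_speed_mul_arclengthDeriv (φ := φ) hk).mul
    (h.hasDerivAt_arclengthDeriv_curvature hφ x)).add ((hτ.sub hs).div_const 4)
  exact hsum.congr_deriv (by ring)

theorem IsSelfSimilarProfile.monotone_flux (h : IsSelfSimilarProfile φ) (hφ : ContDiff ℝ 4 φ) :
    Monotone (flux φ) :=
  monotone_of_hasDerivAt_nonneg (h.hasDerivAt_flux hφ) fun x ↦
    mul_nonneg (speed_pos φ x).le (sq_nonneg _)

theorem energy_sub_mul_arclength_le (hφ : ContDiff ℝ 1 φ) {α β x : ℝ}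
    (h : φ 0 * φ x ≤ α * arclength φ x + β) :
    energy φ x - α / 4 * arclength φ x ≤ curvature φ x ^ 2 / 2 + (2 * β - φ 0 ^ 2) / 8 := by
  have hchord : (x - 0) ^ 2 + (φ x - φ 0) ^ 2 ≤ arclength φ x ^ 2 :=
    sq_add_sq_le_sq_integral_speed hφ 0 x
  rw [energy]
  linarith

theorem IsSelfSimilarProfile.flux_eq (h : IsSelfSimilarProfile φ) (hφ : ContDiff ℝ 4 φ)
    {α β : ℝ} (hbound : ∀ x, φ 0 * φ x ≤ α * arclength φ x + β) (x : ℝ) : flux φ x = α / 4 := by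
  have hderiv : ∀ x, HasDerivAt (fun x ↦ energy φ x - α / 4 * arclength φ x)
      (speed φ x * (flux φ x - α / 4)) x := fun x ↦
    ((hasDerivAt_energy (hφ.of_le (by norm_num)) x).sub
      ((hasDerivAt_arclength (hφ.of_le (by norm_num)) x).const_mul (α / 4))).congr_deriv (by ring)
  have hle : ∀ a, ∃ x ∈ Ioo a (a + 4),
      energy φ x - α / 4 * arclength φ x ≤ 1 / 2 + (2 * β - φ 0 ^ 2) / 8 := fun a ↦ by
    obtain ⟨x, hx, hk⟩ := exists_mem_Ioo_abs_curvature_lt (ε := 1) (hφ.of_le (by norm_num))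
      (show a < a + 4 by linarith) (by linarith [Real.pi_lt_four])
    have hk_sq : curvature φ x ^ 2 < 1 := (sq_lt_one_iff_abs_lt_one _).2 hk
    exact ⟨x, hx, by linarith [energy_sub_mul_arclength_le (hφ.of_le (by norm_num)) (hbound x)]⟩
  have htop := frequently_atTop.2 fun a ↦ (hle a).imp fun _ hx ↦ ⟨hx.1.1.le, hx.2⟩
  have hbot := frequently_atBot.2 fun a ↦ (hle (a - 4)).imp fun _ hx ↦
    ⟨by linarith [hx.1.2], hx.2⟩
  exact sub_eq_zero.1 (eq_zero_of_hasDerivAt_mul_monotone hderiv (one_le_speed φ)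
    (fun _ _ hxy ↦ sub_le_sub_right (h.monotone_flux hφ hxy) _) htop hbot x)

theorem IsSelfSimilarProfile.arclengthDeriv_curvature_eq_zero (h : IsSelfSimilarProfile φ)
    (hφ : ContDiff ℝ 4 φ) {c : ℝ} (hflux : ∀ x, flux φ x = c) (x : ℝ) :
    arclengthDeriv φ (curvature φ) x = 0 := by
  have hderiv := h.hasDerivAt_flux hφ x
  rw [funext hflux] at hderiv
  have hzero := (hasDerivAt_const x c).unique hderiv
  exact pow_eq_zero_iff two_ne_zero |>.1 <|
    (mul_eq_zero.1 hzero.symm).resolve_left (speed_ne_zero φ x)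

end GraphCurve

open GraphCurve in
theorem stmt_8_general (φ v k s : ℝ → ℝ) (hφ : ContDiff ℝ 4 φ)
    (hv : ∀ x, v x = Real.sqrt (1 + deriv φ x ^ 2))
    (hk : ∀ x, k x = deriv (deriv φ) x / v x ^ 3)
    (hs : ∀ x₁, s x₁ = ∫ z in (0 : ℝ)..x₁, Real.sqrt (1 + deriv φ z ^ 2))
    (hprofile : ∀ x : ℝ,
      (φ x - x * deriv φ x) / 4 = -deriv (fun t ↦ deriv k t / v t) x)
    (α β : ℝ)
    (hbound : ∀ x₁ : ℝ, φ 0 * φ x₁ ≤ α * s x₁ + β) :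
    ∃ c : ℝ, ∀ x₁ : ℝ, φ x₁ = c * x₁ := by
  obtain rfl : v = speed φ := funext hv
  obtain rfl : k = curvature φ := funext hk
  obtain rfl : s = arclength φ := funext hs
  have hφ_profile : IsSelfSimilarProfile φ := hprofile
  have hflux : ∀ x, flux φ x = α / 4 := hφ_profile.flux_eq hφ hbound
  have hk_const : arclengthDeriv φ (curvature φ) = fun _ ↦ 0 :=
    funext (hφ_profile.arclengthDeriv_curvature_eq_zero hφ hflux)
  have hnormal : ∀ x, φ x = x * deriv φ x := fun x ↦ by
    have hx := hφ_profile x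
    rw [hk_const, deriv_const] at hx
    linarith
  exact ⟨deriv φ 0, eq_deriv_zero_mul_of_eq_self_mul_deriv (hφ.of_le (by norm_num)) hnormal⟩

/-- If a graph-like forward self-similar profile `φ` satisfies
`φ(0) φ(x₁) ≤ α s(x₁) + β` for some `α, β`, then `φ` is linear through the origin. -/
theorem stmt_8 (φ v k s : ℝ → ℝ) (hφ : ContDiff ℝ (⊤ : ℕ∞) φ)
    (hv : ∀ x, v x = Real.sqrt (1 + deriv φ x ^ 2))
    (hk : ∀ x, k x = deriv (deriv φ) x / v x ^ 3)
    (hs : ∀ x₁, s x₁ = ∫ z in (0:ℝ)..x₁, Real.sqrt (1 + deriv φ z ^ 2))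
    (hprofile : ∀ x : ℝ,
      (φ x - x * deriv φ x) / 4 = -deriv (fun t => deriv k t / v t) x)
    (α β : ℝ)
    (hbound : ∀ x₁ : ℝ, φ 0 * φ x₁ ≤ α * s x₁ + β) :
    ∃ c : ℝ, ∀ x₁ : ℝ, φ x₁ = c * x₁ := by
  exact stmt_8_general φ v k s (contDiff_infty.1 hφ 4) hv hk hs hprofile α β hbound
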